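/- arXiv:2602.06934 — 3 statements merged into one kernel-verified Lean document; each statement's English description precedes it below -/
import Mathlib

section
/- Every transactions-based protocol is oblivious: if S is a local-states function, R a set of transactions over S, and F the transactions-based protocol over R and S with transition sets T(P) = R(P)↑P, then for all nonempty finite sets of agents P ⊊ P', T(P)↑P' ⊆ T(P'). -/
/-- An (atomic) transaction: a pair of distinct configurations over a nonempty
finite set `Q` of participant agents. -/
structure Txn (𝒜 𝒮 : Type*) where
  Q : Finset 𝒜
  hQ : Q.Nonempty
  c : {a // a ∈ Q} → 𝒮
  c' : {a // a ∈ Q} → 𝒮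
  hne : c ≠ c'

/-- The `P`-closure of a pair `cc = (c, c')` of configurations over participants `Q`:
the set of pairs `(d, d')` of configurations over `P` (with values in `S`) such that
`d` and `d'` agree with `c` and `c'` respectively on `Q`, and `d p = d' p` for every
`p ∈ P \ Q`. (Empty unless `Q ⊆ P`.) -/
def upClosure {𝒜 𝒮 : Type*} (S : Set 𝒮) (Q : Finset 𝒜)
    (cc : ({a // a ∈ Q} → 𝒮) × ({a // a ∈ Q} → 𝒮)) (P : Finset 𝒜) :
    Set (({a // a ∈ P} → 𝒮) × ({a // a ∈ P} → 𝒮)) :=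
  {dd | ∃ h : Q ⊆ P,
    (∀ p, dd.1 p ∈ S ∧ dd.2 p ∈ S) ∧
    (∀ q : {a // a ∈ Q}, dd.1 ⟨q.1, h q.2⟩ = cc.1 q ∧ dd.2 ⟨q.1, h q.2⟩ = cc.2 q) ∧
    (∀ p : {a // a ∈ P}, p.1 ∉ Q → dd.1 p = dd.2 p)}

/-- `R(P)`: the transactions in `R` whose participants `Q` satisfy `Q ⊆ P` and which
are over `S(Q')` for some `Q' ⊆ P`. -/
def RofP {𝒜 𝒮 : Type*} (SF : Finset 𝒜 → Set 𝒮) (R : Set (Txn 𝒜 𝒮)) (P : Finset 𝒜) :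
    Set (Txn 𝒜 𝒮) :=
  {t | t ∈ R ∧ t.Q ⊆ P ∧ ∃ Q' : Finset 𝒜, Q' ⊆ P ∧ t.Q ⊆ Q' ∧
    (∀ q, t.c q ∈ SF Q') ∧ (∀ q, t.c' q ∈ SF Q')}

/-- The transition set `T(P) = R(P)↑P` of the transactions-based protocol over `R`
and the local-states function `SF`. -/
def TofP {𝒜 𝒮 : Type*} (SF : Finset 𝒜 → Set 𝒮) (R : Set (Txn 𝒜 𝒮)) (P : Finset 𝒜) :
    Set (({a // a ∈ P} → 𝒮) × ({a // a ∈ P} → 𝒮)) :=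
  ⋃ t ∈ RofP SF R P, upClosure (SF P) t.Q (t.c, t.c') P

section

variable {𝒜 𝒮 : Type*} {P P' : Finset 𝒜}

theorem upClosure_subset_upClosure_of_mem {S S' : Set 𝒮} {Q : Finset 𝒜}
    {cc : ({a // a ∈ Q} → 𝒮) × ({a // a ∈ Q} → 𝒮)}
    {dd : ({a // a ∈ P} → 𝒮) × ({a // a ∈ P} → 𝒮)} (hdd : dd ∈ upClosure S Q cc P) :
    upClosure S' P dd P' ⊆ upClosure S' Q cc P' := by
  obtain ⟨hQP, -, hdd_agree, hdd_idle⟩ := hdd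
  rintro ee ⟨hPP', hee_mem, hee_agree, hee_idle⟩
  have agree_on_Q (q : {a // a ∈ Q}) :
      ee.1 ⟨q, hPP' (hQP q.2)⟩ = cc.1 q ∧ ee.2 ⟨q, hPP' (hQP q.2)⟩ = cc.2 q :=
    have hee := hee_agree ⟨q, hQP q.2⟩
    ⟨hee.1.trans (hdd_agree q).1, hee.2.trans (hdd_agree q).2⟩
  have idle_off_Q (p : {a // a ∈ P'}) (hpQ : p.1 ∉ Q) : ee.1 p = ee.2 p := by
    by_cases hpP : p.1 ∈ P
    · calc
        ee.1 p = dd.1 ⟨p, hpP⟩ := (hee_agree ⟨p, hpP⟩).1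
        _ = dd.2 ⟨p, hpP⟩ := hdd_idle ⟨p, hpP⟩ hpQ
        _ = ee.2 p := (hee_agree ⟨p, hpP⟩).2.symm
    · exact hee_idle p hpP
  exact ⟨hQP.trans hPP', hee_mem, agree_on_Q, idle_off_Q⟩

theorem RofP_mono (SF : Finset 𝒜 → Set 𝒮) (R : Set (Txn 𝒜 𝒮)) (hPP' : P ⊆ P') :
    RofP SF R P ⊆ RofP SF R P' := by
  rintro t ⟨htR, htP, Q', hQ'P, htQ'⟩
  exact ⟨htR, htP.trans hPP', Q', hQ'P.trans hPP', htQ'⟩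

theorem transactionsBased_oblivious_general (SF : Finset 𝒜 → Set 𝒮) (R : Set (Txn 𝒜 𝒮))
    (hPP' : P ⊆ P') :
    (⋃ dd ∈ TofP SF R P, upClosure (SF P') P dd P') ⊆ TofP SF R P' := by
  refine Set.iUnion₂_subset fun dd hdd => ?_
  obtain ⟨t, ht, hdd⟩ := Set.mem_iUnion₂.mp hdd
  calc
    upClosure (SF P') P dd P' ⊆ upClosure (SF P') t.Q (t.c, t.c') P' :=
      upClosure_subset_upClosure_of_mem hdd
    _ ⊆ TofP SF R P' :=
      Set.subset_biUnion_of_mem (u := fun t : Txn 𝒜 𝒮 => upClosure (SF P') t.Q (t.c, t.c') P')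
        (RofP_mono SF R hPP' ht)

end

/-- Every transactions-based protocol is oblivious: if `SF` is a local-states function
(with initial state `s0`), `R` a set of transactions over `SF`, and `T(P) = R(P)↑P`
the transition sets of the transactions-based protocol over `R` and `SF`, then for all
nonempty finite sets of agents `P ⊊ P'`, `T(P)↑P' ⊆ T(P')`. -/
theorem transactionsBased_oblivious
    {𝒜 𝒮 : Type*} (s0 : 𝒮) (SF : Finset 𝒜 → Set 𝒮)
    (hs0 : ∀ P : Finset 𝒜, P.Nonempty → s0 ∈ SF P)
    (hmono : ∀ P P' : Finset 𝒜, P.Nonempty → P ⊆ P' → SF P ⊆ SF P')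
    (R : Set (Txn 𝒜 𝒮))
    (hR : ∀ t ∈ R, ∃ Q' : Finset 𝒜, t.Q ⊆ Q' ∧
      (∀ q, t.c q ∈ SF Q') ∧ (∀ q, t.c' q ∈ SF Q'))
    (P P' : Finset 𝒜) (hP : P.Nonempty) (hPP' : P ⊂ P') :
    (⋃ dd ∈ TofP SF R P, upClosure (SF P') P dd P') ⊆ TofP SF R P' :=
  transactionsBased_oblivious_general SF R hPP'.subset
end

section
/- Implementation preserves obliviousness: let F be a protocol over local-states function S on state type 𝒮 (the specification) and F' a protocol over local-states function S' on state type 𝒮' (the implementation), and let f : 𝒮' → 𝒮 be an agentwise implementation mapping that is surjective on locals, a backward simulation, and a tight forward simulation. If F' is oblivious, then F is oblivious. -/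
/-- `C(P)`: the configurations over `P` and `S(P)`. -/
def CofP {𝒜 𝒮 : Type*} (SF : Finset 𝒜 → Set 𝒮) (P : Finset 𝒜) :
    Set ({a // a ∈ P} → 𝒮) :=
  {c | ∀ p, c p ∈ SF P}

/-- The projection `c/P` of a configuration over `P'` to `P ⊆ P'`. -/
def restr {𝒜 𝒮 : Type*} {P P' : Finset 𝒜} (h : P ⊆ P') (c : {a // a ∈ P'} → 𝒮) :
    {a // a ∈ P} → 𝒮 :=
  fun p => c ⟨p.1, h p.2⟩

/-- A protocol with transition sets `T(P)` (over local-states function `SF`) is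
oblivious if for all nonempty finite `P ⊊ P'`, `T(P)↑P' ⊆ T(P')`. -/
def Oblivious {𝒜 𝒮 : Type*} (SF : Finset 𝒜 → Set 𝒮)
    (T : (P : Finset 𝒜) → Set (({a // a ∈ P} → 𝒮) × ({a // a ∈ P} → 𝒮))) : Prop :=
  ∀ P P' : Finset 𝒜, P.Nonempty → P ⊂ P' →
    (⋃ dd ∈ T P, upClosure (SF P') P dd P') ⊆ T P'

/-- A protocol with transition sets `T(P)` (over local-states function `SF`) is
interactive if for all nonempty finite `P ⊊ P'` and every `c ∈ C(P')` with
`c/P ∈ C(P)`, there is a computation `c →* c'` of `F(P')` with `c'/P ∉ C(P)`. -/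
def Interactive {𝒜 𝒮 : Type*} (SF : Finset 𝒜 → Set 𝒮)
    (T : (P : Finset 𝒜) → Set (({a // a ∈ P} → 𝒮) × ({a // a ∈ P} → 𝒮))) : Prop :=
  ∀ P P' : Finset 𝒜, P.Nonempty → ∀ h : P ⊂ P', ∀ c ∈ CofP SF P',
    restr h.subset c ∈ CofP SF P →
    ∃ c', Relation.ReflTransGen (fun a b => (a, b) ∈ T P') c c' ∧
      restr h.subset c' ∉ CofP SF P

/-- The transitions of a protocol over `SF` are pairs of distinct configurations
over `P` (values in `S(P)`). -/
def ProtocolWF {𝒜 𝒮 : Type*} (SF : Finset 𝒜 → Set 𝒮)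
    (T : (P : Finset 𝒜) → Set (({a // a ∈ P} → 𝒮) × ({a // a ∈ P} → 𝒮))) : Prop :=
  ∀ P : Finset 𝒜, P.Nonempty → ∀ dd ∈ T P,
    dd.1 ≠ dd.2 ∧ (∀ p, dd.1 p ∈ SF P) ∧ (∀ p, dd.2 p ∈ SF P)

/-- `f` is surjective on locals: for every nonempty finite `P`, `f` maps `S'(P)`
onto `S(P)`. -/
def SurjOnLocals {𝒜 𝒮 𝒮' : Type*} (f : 𝒮' → 𝒮)
    (SF' : Finset 𝒜 → Set 𝒮') (SF : Finset 𝒜 → Set 𝒮) : Prop :=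
  ∀ P : Finset 𝒜, P.Nonempty → f '' SF' P = SF P

/-- `f` is locality-reflecting: for all nonempty finite `P ⊊ P'` and every
`s ∈ S'(P')`, `f s ∈ S(P)` implies `s ∈ S'(P)`. -/
def LocalityReflecting {𝒜 𝒮 𝒮' : Type*} (f : 𝒮' → 𝒮)
    (SF' : Finset 𝒜 → Set 𝒮') (SF : Finset 𝒜 → Set 𝒮) : Prop :=
  ∀ P P' : Finset 𝒜, P.Nonempty → P ⊂ P' →
    ∀ s ∈ SF' P', f s ∈ SF P → s ∈ SF' P

/-- `f` is a backward simulation: for every nonempty finite `P` and every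
`(a, b) ∈ T'(P)`, either `π_P a = π_P b` or `(π_P a, π_P b) ∈ T(P)`. -/
def BackwardSim {𝒜 𝒮 𝒮' : Type*} (f : 𝒮' → 𝒮)
    (T' : (P : Finset 𝒜) → Set (({a // a ∈ P} → 𝒮') × ({a // a ∈ P} → 𝒮')))
    (T : (P : Finset 𝒜) → Set (({a // a ∈ P} → 𝒮) × ({a // a ∈ P} → 𝒮))) : Prop :=
  ∀ P : Finset 𝒜, P.Nonempty → ∀ ab ∈ T' P,
    (f ∘ ab.1 = f ∘ ab.2) ∨ (f ∘ ab.1, f ∘ ab.2) ∈ T P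

/-- `f` is a tight forward simulation: for every nonempty finite `P`, every
`(c, d) ∈ T(P)`, and every configuration `a ∈ C'(P)` with `π_P a = c`, there is a
computation of `F'(P)` from `a` to some `b` with `π_P b = d` such that every
configuration along the computation maps under `π_P` to `c` or to `d`. -/
def TightForwardSim {𝒜 𝒮 𝒮' : Type*} (f : 𝒮' → 𝒮)
    (SF' : Finset 𝒜 → Set 𝒮')
    (T' : (P : Finset 𝒜) → Set (({a // a ∈ P} → 𝒮') × ({a // a ∈ P} → 𝒮')))
    (T : (P : Finset 𝒜) → Set (({a // a ∈ P} → 𝒮) × ({a // a ∈ P} → 𝒮))) : Prop :=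
  ∀ P : Finset 𝒜, P.Nonempty → ∀ cd ∈ T P, ∀ a : {x // x ∈ P} → 𝒮',
    (∀ p, a p ∈ SF' P) → f ∘ a = cd.1 →
    ∃ l : List ({x // x ∈ P} → 𝒮'), l ≠ [] ∧
      l.Chain' (fun x y => (x, y) ∈ T' P) ∧
      l.head? = some a ∧
      (∃ b, l.getLast? = some b ∧ f ∘ b = cd.2) ∧
      (∀ x ∈ l, f ∘ x = cd.1 ∨ f ∘ x = cd.2)

/-!
Write `π` for composition with `f`, and `Δ` for the set of pairs with equal components. A
computation realising a transition `(c, d)` tightly passes only through the fibres of `c` and of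
`d`, so one of its steps leads from the first fibre to the second: every transition of `F` is the
image under `π` of a single transition of `F'`. Closures of images are images of closures, because
the states of the idle agents lift to `F'`. Hence
`T(P)↑P' ⊆ π(T'(P))↑P' ⊆ π(T'(P)↑P') ⊆ π(T'(P')) ⊆ T(P') ∪ Δ`,
and `Δ` is excluded because the closure of a pair of distinct configurations consists of such pairs.
-/

theorem exists_rel_of_isChain {α : Type*} {R : α → α → Prop} {A : α → Prop} {l : List α}
    (hl : l.IsChain R) {a b : α} (ha : l.head? = some a) (hb : l.getLast? = some b)
    (hAa : A a) (hAb : ¬ A b) : ∃ x ∈ l, ∃ y ∈ l, R x y ∧ A x ∧ ¬ A y := by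
  by_contra! hstep
  have hl' : l.IsChain fun x y => A x → A y :=
    hl.imp_of_mem_imp fun x y hx hy hxy => hstep x hx y hy hxy
  have hA : ∀ x ∈ l, A x := hl'.induction A l (fun _ _ h => h) fun hne => by
    rwa [Option.some_injective _ ((List.head?_eq_some_head hne).symm.trans ha)]
  exact hAb (hA b (List.mem_of_getLast? hb))

theorem exists_comp_eq_of_surjOn {ι 𝒮 𝒮' : Type*} {f : 𝒮' → 𝒮} {S' : Set 𝒮'} {S : Set 𝒮}
    (hf : Set.SurjOn f S' S) {c : ι → 𝒮} (hc : ∀ i, c i ∈ S) :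
    ∃ a : ι → 𝒮', (∀ i, a i ∈ S') ∧ f ∘ a = c := by
  choose a ha hfa using fun i => hf (hc i)
  exact ⟨a, ha, funext hfa⟩

section Overwrite

variable {𝒜 𝒮 𝒮' : Type*} {Q P : Finset 𝒜}

open Classical in
/-- The configuration over `P` in which the agents of `Q` have their states in `c` and all others
their states in `g`. The closure of `(c, c')` consists of the pairs
`(overwrite c g, overwrite c' g)`. -/
noncomputable def overwrite (c : {a // a ∈ Q} → 𝒮) (g : {a // a ∈ P} → 𝒮) : {a // a ∈ P} → 𝒮 :=
  fun p => if hp : p.1 ∈ Q then c ⟨p.1, hp⟩ else g p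

theorem overwrite_of_mem (c : {a // a ∈ Q} → 𝒮) (g : {a // a ∈ P} → 𝒮) {p : {a // a ∈ P}}
    (hp : p.1 ∈ Q) : overwrite c g p = c ⟨p.1, hp⟩ :=
  dif_pos hp

theorem overwrite_of_notMem (c : {a // a ∈ Q} → 𝒮) (g : {a // a ∈ P} → 𝒮) {p : {a // a ∈ P}}
    (hp : p.1 ∉ Q) : overwrite c g p = g p :=
  dif_neg hp

theorem comp_overwrite (f : 𝒮' → 𝒮) (c : {a // a ∈ Q} → 𝒮') (g : {a // a ∈ P} → 𝒮') :
    f ∘ overwrite c g = overwrite (f ∘ c) (f ∘ g) :=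
  funext fun p => by classical exact apply_dite f (p.1 ∈ Q) _ _

theorem overwrite_mem {S : Set 𝒮} {c : {a // a ∈ Q} → 𝒮} {g : {a // a ∈ P} → 𝒮}
    (hc : ∀ q, c q ∈ S) (hg : ∀ p, g p ∈ S) (p : {a // a ∈ P}) : overwrite c g p ∈ S := by
  by_cases hp : p.1 ∈ Q
  · exact overwrite_of_mem c g hp ▸ hc _
  · exact overwrite_of_notMem c g hp ▸ hg p

theorem overwrite_eq_of_restr_eq {c : {a // a ∈ Q} → 𝒮} {g d : {a // a ∈ P} → 𝒮} (h : Q ⊆ P)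
    (hc : restr h d = c) (hg : ∀ p : {a // a ∈ P}, p.1 ∉ Q → g p = d p) : overwrite c g = d := by
  subst hc
  funext p
  by_cases hp : p.1 ∈ Q
  · exact overwrite_of_mem _ g hp
  · exact (overwrite_of_notMem _ g hp).trans (hg p hp)

end Overwrite

section UpClosure

variable {𝒜 𝒮 𝒮' : Type*} {Q P : Finset 𝒜}

theorem overwrite_mem_upClosure {S : Set 𝒮} {c c' : {a // a ∈ Q} → 𝒮} {g : {a // a ∈ P} → 𝒮}
    (h : Q ⊆ P) (hc : ∀ q, c q ∈ S) (hc' : ∀ q, c' q ∈ S) (hg : ∀ p, g p ∈ S) :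
    (overwrite c g, overwrite c' g) ∈ upClosure S Q (c, c') P :=
  ⟨h, fun p => ⟨overwrite_mem hc hg p, overwrite_mem hc' hg p⟩,
    fun q => ⟨overwrite_of_mem c g q.2, overwrite_of_mem c' g q.2⟩,
    fun _ hp => (overwrite_of_notMem c g hp).trans (overwrite_of_notMem c' g hp).symm⟩

theorem overwrite_eq_of_mem_upClosure {S : Set 𝒮}
    {cc : ({a // a ∈ Q} → 𝒮) × ({a // a ∈ Q} → 𝒮)} {dd : ({a // a ∈ P} → 𝒮) × ({a // a ∈ P} → 𝒮)}
    (hdd : dd ∈ upClosure S Q cc P) :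
    overwrite cc.1 dd.1 = dd.1 ∧ overwrite cc.2 dd.1 = dd.2 := by
  obtain ⟨h, -, hagree, hidle⟩ := hdd
  exact ⟨overwrite_eq_of_restr_eq h (funext fun q => (hagree q).1) fun _ _ => rfl,
    overwrite_eq_of_restr_eq h (funext fun q => (hagree q).2) hidle⟩

theorem fst_ne_snd_of_mem_upClosure {S : Set 𝒮}
    {cc : ({a // a ∈ Q} → 𝒮) × ({a // a ∈ Q} → 𝒮)} {dd : ({a // a ∈ P} → 𝒮) × ({a // a ∈ P} → 𝒮)}
    (hcc : cc.1 ≠ cc.2) (hdd : dd ∈ upClosure S Q cc P) : dd.1 ≠ dd.2 := by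
  obtain ⟨h, -, hagree, -⟩ := hdd
  intro heq
  apply hcc
  funext q
  rw [← (hagree q).1, ← (hagree q).2, heq]

theorem exists_mem_upClosure_comp_eq {f : 𝒮' → 𝒮} {S' : Set 𝒮'} {S : Set 𝒮}
    (hf : Set.SurjOn f S' S) {x y : {a // a ∈ Q} → 𝒮'} (hx : ∀ q, x q ∈ S') (hy : ∀ q, y q ∈ S')
    {dd : ({a // a ∈ P} → 𝒮) × ({a // a ∈ P} → 𝒮)}
    (hdd : dd ∈ upClosure S Q (f ∘ x, f ∘ y) P) :
    ∃ ee ∈ upClosure S' Q (x, y) P, (f ∘ ee.1, f ∘ ee.2) = dd := by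
  obtain ⟨g, hg, hfg⟩ := exists_comp_eq_of_surjOn hf fun p => (hdd.2.1 p).1
  obtain ⟨hfst, hsnd⟩ := overwrite_eq_of_mem_upClosure hdd
  refine ⟨(overwrite x g, overwrite y g), overwrite_mem_upClosure hdd.1 hx hy hg, ?_⟩
  rw [comp_overwrite, comp_overwrite, hfg, hfst, hsnd]

end UpClosure

section Implementation

variable {𝒜 𝒮 𝒮' : Type*} {SF : Finset 𝒜 → Set 𝒮} {SF' : Finset 𝒜 → Set 𝒮'}
  {T : (P : Finset 𝒜) → Set (({a // a ∈ P} → 𝒮) × ({a // a ∈ P} → 𝒮))}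
  {T' : (P : Finset 𝒜) → Set (({a // a ∈ P} → 𝒮') × ({a // a ∈ P} → 𝒮'))} {f : 𝒮' → 𝒮}

/-- Every specification transition is the image of a single implementation transition. Unlike in a
forward simulation, the source of the latter cannot be prescribed. -/
def LiftsTransitions (f : 𝒮' → 𝒮)
    (T' : (P : Finset 𝒜) → Set (({a // a ∈ P} → 𝒮') × ({a // a ∈ P} → 𝒮')))
    (T : (P : Finset 𝒜) → Set (({a // a ∈ P} → 𝒮) × ({a // a ∈ P} → 𝒮))) : Prop :=
  ∀ P : Finset 𝒜, P.Nonempty → ∀ cd ∈ T P, ∃ xy ∈ T' P, (f ∘ xy.1, f ∘ xy.2) = cd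

theorem TightForwardSim.liftsTransitions (htight : TightForwardSim f SF' T' T)
    (hT : ProtocolWF SF T) (hsurj : ∀ P : Finset 𝒜, P.Nonempty → Set.SurjOn f (SF' P) (SF P)) :
    LiftsTransitions f T' T := by
  rintro P hP ⟨c, d⟩ hcd
  obtain ⟨hne, hc, -⟩ := hT P hP _ hcd
  obtain ⟨a, ha, hac⟩ := exists_comp_eq_of_surjOn (hsurj P hP) hc
  obtain ⟨l, -, hchain, hhead, ⟨b, hlast, hbd⟩, hfibres⟩ := htight P hP _ hcd a ha hac
  have hbc : f ∘ b ≠ c := fun h => hne (h.symm.trans hbd)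
  obtain ⟨x, -, y, hy, hxy, hxc, hyc⟩ :=
    exists_rel_of_isChain (A := fun z => f ∘ z = c) hchain hhead hlast hac hbc
  exact ⟨(x, y), hxy, Prod.ext hxc ((hfibres y hy).resolve_left hyc)⟩

theorem implementation_preserves_oblivious_general
    (hmono' : ∀ P P' : Finset 𝒜, P.Nonempty → P ⊆ P' → SF' P ⊆ SF' P')
    (hT : ProtocolWF SF T) (hT' : ProtocolWF SF' T')
    (hsurj : ∀ P : Finset 𝒜, P.Nonempty → Set.SurjOn f (SF' P) (SF P))
    (hback : BackwardSim f T' T) (hlift : LiftsTransitions f T' T) (hobl' : Oblivious SF' T') :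
    Oblivious SF T := by
  intro P P' hP hPP' dd hdd
  obtain ⟨cd, hcd, hdd⟩ := Set.mem_iUnion₂.1 hdd
  have hP' : P'.Nonempty := hP.mono hPP'.subset
  have hdd_ne : dd.1 ≠ dd.2 := fst_ne_snd_of_mem_upClosure (hT P hP cd hcd).1 hdd
  obtain ⟨⟨x, y⟩, hxy, rfl⟩ := hlift P hP cd hcd
  obtain ⟨-, hx, hy⟩ := hT' P hP _ hxy
  have hSF' : SF' P ⊆ SF' P' := hmono' P P' hP hPP'.subset
  obtain ⟨ee, hee, rfl⟩ := exists_mem_upClosure_comp_eq (hsurj P' hP')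
    (fun q => hSF' (hx q)) (fun q => hSF' (hy q)) hdd
  have hee' : ee ∈ T' P' := hobl' P P' hP hPP' (Set.mem_biUnion hxy hee)
  exact (hback P' hP' ee hee').resolve_left hdd_ne

end Implementation

/-- Implementation preserves obliviousness: let `F` be a protocol over local-states
function `SF` on `𝒮` (the specification) and `F'` a protocol over `SF'` on `𝒮'`
(the implementation), and let `f : 𝒮' → 𝒮` be an agentwise implementation mapping
(`f s0' = s0`) that is surjective on locals, a backward simulation, and a tight
forward simulation. If `F'` is oblivious, then `F` is oblivious. -/
theorem implementation_preserves_oblivious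
    {𝒜 𝒮 𝒮' : Type*} (s0 : 𝒮) (s0' : 𝒮')
    (SF : Finset 𝒜 → Set 𝒮) (SF' : Finset 𝒜 → Set 𝒮')
    (hs0 : ∀ P : Finset 𝒜, P.Nonempty → s0 ∈ SF P)
    (hmono : ∀ P P' : Finset 𝒜, P.Nonempty → P ⊆ P' → SF P ⊆ SF P')
    (hs0' : ∀ P : Finset 𝒜, P.Nonempty → s0' ∈ SF' P)
    (hmono' : ∀ P P' : Finset 𝒜, P.Nonempty → P ⊆ P' → SF' P ⊆ SF' P')
    (T : (P : Finset 𝒜) → Set (({a // a ∈ P} → 𝒮) × ({a // a ∈ P} → 𝒮)))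
    (T' : (P : Finset 𝒜) → Set (({a // a ∈ P} → 𝒮') × ({a // a ∈ P} → 𝒮')))
    (hT : ProtocolWF SF T) (hT' : ProtocolWF SF' T')
    (f : 𝒮' → 𝒮) (hf0 : f s0' = s0)
    (hsurj : SurjOnLocals f SF' SF)
    (hback : BackwardSim f T' T)
    (htight : TightForwardSim f SF' T' T)
    (hobl' : Oblivious SF' T') :
    Oblivious SF T := by
  have hsurjOn : ∀ P : Finset 𝒜, P.Nonempty → Set.SurjOn f (SF' P) (SF P) :=
    fun P hP => (hsurj P hP).superset
  exact implementation_preserves_oblivious_general hmono' hT hT' hsurjOn hback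
    (htight.liftsTransitions hT hsurjOn) hobl'
end

section
/- Implementation preserves interactivity: let F be a protocol over local-states function S on state type 𝒮 (the specification) and F' a protocol over local-states function S' on state type 𝒮' (the implementation), and let f : 𝒮' → 𝒮 be an agentwise implementation mapping that is surjective on locals, locality-reflecting, and a backward simulation. If F' is interactive, then F is interactive. -/
/-!
A specification configuration `c` is lifted agentwise to an implementation configuration `a`.
Since `f` reflects locality, `a/P` is a configuration over `P` whenever `c/P` is, so
interactivity of the implementation provides a computation from `a` that leaves `C'(P)`. Its image
under the backward simulation is a computation from `c`, up to stuttering, and reflection of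
locality a second time shows that this image leaves `C(P)`.
-/

section

variable {𝒜 𝒮 𝒮' : Type*} {SF : Finset 𝒜 → Set 𝒮} {SF' : Finset 𝒜 → Set 𝒮'}
  {T : (P : Finset 𝒜) → Set (({a // a ∈ P} → 𝒮) × ({a // a ∈ P} → 𝒮))}
  {T' : (P : Finset 𝒜) → Set (({a // a ∈ P} → 𝒮') × ({a // a ∈ P} → 𝒮'))}
  {f : 𝒮' → 𝒮} {P P' : Finset 𝒜}

theorem cofP_eq_univ_pi : CofP SF P = Set.univ.pi fun _ => SF P := by
  simp [CofP, Set.pi]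

theorem SurjOnLocals.image_comp_cofP (hf : SurjOnLocals f SF' SF) (hP : P.Nonempty) :
    (f ∘ ·) '' CofP SF' P = CofP SF P := by
  rw [cofP_eq_univ_pi, cofP_eq_univ_pi, ← hf P hP]
  exact Set.piMap_image_univ_pi (fun _ => f) fun _ => SF' P

theorem LocalityReflecting.restr_mem_cofP (hf : LocalityReflecting f SF' SF) (hP : P.Nonempty)
    (h : P ⊂ P') {a : {p // p ∈ P'} → 𝒮'} (ha : a ∈ CofP SF' P')
    (hfa : restr h.subset (f ∘ a) ∈ CofP SF P) : restr h.subset a ∈ CofP SF' P :=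
  fun p => hf P P' hP h _ (ha _) (hfa p)

theorem ProtocolWF.mem_cofP_of_reflTransGen (hT : ProtocolWF SF T) (hP : P.Nonempty)
    {c d : {p // p ∈ P} → 𝒮} (hc : c ∈ CofP SF P)
    (hcd : Relation.ReflTransGen (fun x y => (x, y) ∈ T P) c d) : d ∈ CofP SF P := by
  cases hcd with
  | refl => exact hc
  | tail _ hstep => exact (hT P hP _ hstep).2.2

theorem BackwardSim.reflTransGen_comp (hf : BackwardSim f T' T) (hP : P.Nonempty)
    {a b : {p // p ∈ P} → 𝒮'} (hab : Relation.ReflTransGen (fun x y => (x, y) ∈ T' P) a b) :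
    Relation.ReflTransGen (fun x y => (x, y) ∈ T P) (f ∘ a) (f ∘ b) := by
  refine hab.lift' (f ∘ ·) fun x y hxy => ?_
  obtain hstutter | hstep : f ∘ x = f ∘ y ∨ (f ∘ x, f ∘ y) ∈ T P := hf P hP (x, y) hxy
  · rw [Function.onFun, hstutter]
  · exact .single hstep

theorem implementation_preserves_interactive_general (hT' : ProtocolWF SF' T')
    (hsurj : SurjOnLocals f SF' SF) (hloc : LocalityReflecting f SF' SF)
    (hback : BackwardSim f T' T) (hint' : Interactive SF' T') : Interactive SF T := by
  intro P P' hP h c hc hcP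
  have hP' : P'.Nonempty := hP.mono h.subset
  obtain ⟨a, ha, rfl⟩ := (hsurj.image_comp_cofP hP').superset hc
  obtain ⟨b, hab, hbP⟩ := hint' P P' hP h a ha (hloc.restr_mem_cofP hP h ha hcP)
  have hb : b ∈ CofP SF' P' := hT'.mem_cofP_of_reflTransGen hP' ha hab
  exact ⟨f ∘ b, hback.reflTransGen_comp hP' hab, mt (hloc.restr_mem_cofP hP h hb) hbP⟩

end

/-- Implementation preserves interactivity: let `F` be a protocol over local-states
function `SF` on `𝒮` (the specification) and `F'` a protocol over `SF'` on `𝒮'`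
(the implementation), and let `f : 𝒮' → 𝒮` be an agentwise implementation mapping
(`f s0' = s0`) that is surjective on locals, locality-reflecting, and a backward
simulation. If `F'` is interactive, then `F` is interactive. -/
theorem implementation_preserves_interactive
    {𝒜 𝒮 𝒮' : Type*} (s0 : 𝒮) (s0' : 𝒮')
    (SF : Finset 𝒜 → Set 𝒮) (SF' : Finset 𝒜 → Set 𝒮')
    (hs0 : ∀ P : Finset 𝒜, P.Nonempty → s0 ∈ SF P)
    (hmono : ∀ P P' : Finset 𝒜, P.Nonempty → P ⊆ P' → SF P ⊆ SF P')
    (hs0' : ∀ P : Finset 𝒜, P.Nonempty → s0' ∈ SF' P)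
    (hmono' : ∀ P P' : Finset 𝒜, P.Nonempty → P ⊆ P' → SF' P ⊆ SF' P')
    (T : (P : Finset 𝒜) → Set (({a // a ∈ P} → 𝒮) × ({a // a ∈ P} → 𝒮)))
    (T' : (P : Finset 𝒜) → Set (({a // a ∈ P} → 𝒮') × ({a // a ∈ P} → 𝒮')))
    (hT : ProtocolWF SF T) (hT' : ProtocolWF SF' T')
    (f : 𝒮' → 𝒮) (hf0 : f s0' = s0)
    (hsurj : SurjOnLocals f SF' SF)
    (hloc : LocalityReflecting f SF' SF)
    (hback : BackwardSim f T' T)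
    (hint' : Interactive SF' T') :
    Interactive SF T :=
  implementation_preserves_interactive_general hT' hsurj hloc hback hint'
end
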